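/- arXiv:1207.3739 — 2 statements merged into one kernel-verified Lean document; each statement's English description precedes it below -/
import Mathlib

section
/- Let A be a finite-dimensional left Leibniz algebra that is not nilpotent but all of whose proper subalgebras are nilpotent. Then dim(A/A²) ≤ 1. -/
open Polynomial LinearMap

/-- A (left) Leibniz algebra structure on the `K`-vector space `A`:
a bilinear multiplication satisfying `x(yz) = (xy)z + y(xz)`. -/
structure LeibnizMul (K A : Type*) [Field K] [AddCommGroup A] [Module K A] where
  mul : A →ₗ[K] A →ₗ[K] A
  leibniz : ∀ x y z, mul x (mul y z) = mul (mul x y) z + mul y (mul x z)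

namespace LeibnizMul

variable {K A : Type*} [Field K] [AddCommGroup A] [Module K A]

/-- The product of two subspaces: the span of all products `s·t`, `s ∈ S`, `t ∈ T`. -/
def mulSub (m : LeibnizMul K A) (S T : Submodule K A) : Submodule K A :=
  Submodule.span K (Set.image2 (fun x y => m.mul x y) (S : Set A) (T : Set A))

/-- Relative lower central series of the subalgebra `S`: `lcsIn m S n = S^(n+1)`,
i.e. `lcsIn m S 0 = S` and `lcsIn m S (n+1) = S · (lcsIn m S n)`. -/
def lcsIn (m : LeibnizMul K A) (S : Submodule K A) : ℕ → Submodule K A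
  | 0 => S
  | (n+1) => m.mulSub S (m.lcsIn S n)

/-- `A` is nilpotent: some term of the lower central series vanishes. -/
def IsNilpotent (m : LeibnizMul K A) : Prop := ∃ n, m.lcsIn ⊤ n = ⊥

/-- `S` is a subalgebra: a subspace closed under multiplication. -/
def IsSubalg (m : LeibnizMul K A) (S : Submodule K A) : Prop :=
  ∀ x ∈ S, ∀ y ∈ S, m.mul x y ∈ S

/-- `S` is a (two-sided) ideal. -/
def IsIdeal (m : LeibnizMul K A) (S : Submodule K A) : Prop :=
  ∀ (x : A), ∀ y ∈ S, m.mul x y ∈ S ∧ m.mul y x ∈ S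

/-- `M` is a maximal (proper) subalgebra. -/
def IsMaxSubalg (m : LeibnizMul K A) (M : Submodule K A) : Prop :=
  m.IsSubalg M ∧ M ≠ ⊤ ∧ ∀ S, m.IsSubalg S → M < S → S = ⊤

/-- The Frattini subalgebra: the intersection of all maximal subalgebras. -/
def frattini (m : LeibnizMul K A) : Submodule K A :=
  sInf {M | m.IsMaxSubalg M}

/-- The subalgebra generated by a single element `a`. -/
def subalgGen (m : LeibnizMul K A) (a : A) : Submodule K A :=
  sInf {S | m.IsSubalg S ∧ a ∈ S}

/-- The normal closure of a subspace: the smallest ideal containing it. -/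
def normalClosure (m : LeibnizMul K A) (S : Submodule K A) : Submodule K A :=
  sInf {I | m.IsIdeal I ∧ S ≤ I}

/-- The normalizer of a subspace `C`: all `x` with `x·c ∈ C` and `c·x ∈ C` for all `c ∈ C`. -/
def normalizer (m : LeibnizMul K A) (C : Submodule K A) : Submodule K A :=
  ⨅ c : C, (Submodule.comap (m.mul.flip (c : A)) C ⊓ Submodule.comap (m.mul (c : A)) C)

/-- The center of the subalgebra `S`: all `z ∈ S` with `z·x = x·z = 0` for all `x ∈ S`. -/
def centerIn (m : LeibnizMul K A) (S : Submodule K A) : Submodule K A :=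
  S ⊓ ⨅ x : S, (LinearMap.ker (m.mul.flip (x : A)) ⊓ LinearMap.ker (m.mul (x : A)))

/-- All `z ∈ S` with `z·x ∈ T` and `x·z ∈ T` for all `x ∈ S`. -/
def relCentralizer (m : LeibnizMul K A) (S T : Submodule K A) : Submodule K A :=
  S ⊓ ⨅ x : S, (Submodule.comap (m.mul.flip (x : A)) T ⊓ Submodule.comap (m.mul (x : A)) T)

/-- The upper central series of the subalgebra `S`:
`Z₀ = 0`, `Z_{j+1} = {z ∈ S : zS ⊆ Z_j and Sz ⊆ Z_j}`. -/
def ucsIn (m : LeibnizMul K A) (S : Submodule K A) : ℕ → Submodule K A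
  | 0 => ⊥
  | (j+1) => m.relCentralizer S (m.ucsIn S j)

/-- The right center `{r : A·r = 0}`. -/
def rightCenter (m : LeibnizMul K A) : Submodule K A := LinearMap.ker m.mul.flip

/-- Left-normed powers of `a`: `lpow m a k = a^(k+1)`. -/
def lpow (m : LeibnizMul K A) (a : A) : ℕ → A
  | 0 => a
  | (k+1) => m.mul a (m.lpow a k)

/-- The Fitting null component of left multiplication by `a`. -/
def fittingNull (m : LeibnizMul K A) (a : A) : Submodule K A :=
  ⨆ k, LinearMap.ker ((m.mul a) ^ k)

end LeibnizMul

/-!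
For an ideal `S`, let `P_n(S) = S·(S·(⋯(S·A)))` with `n` factors `S`. The Leibniz identity makes it
stable under left multiplication by `A`, so in a product of `n` factors taken from two ideals `S`
and `T` the factors from `T` do not disturb the count of factors from `S`, nor conversely:
`P_n(S + T) ≤ ∑_{i + j = n} P_i(S) ∩ P_j(T)`. Hence the sum of two nilpotent ideals is nilpotent.
If `dim (A/A²) > 1`, then `A` is the sum of two proper subspaces containing `A²`; these are ideals,
so they cannot both be nilpotent unless `A` is.
-/

namespace LeibnizMul

open Finset.HasAntidiagonal (antidiagonal mem_antidiagonal)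

variable {K A : Type*} [Field K] [AddCommGroup A] [Module K A]

theorem mulSub_eq_map₂ (m : LeibnizMul K A) (S T : Submodule K A) :
    m.mulSub S T = Submodule.map₂ m.mul S T :=
  (Submodule.map₂_eq_span_image2 m.mul S T).symm

theorem mulSub_le {m : LeibnizMul K A} {S T U : Submodule K A} :
    m.mulSub S T ≤ U ↔ ∀ x ∈ S, ∀ y ∈ T, m.mul x y ∈ U := by
  rw [mulSub_eq_map₂, Submodule.map₂_le]

theorem mul_mem_mulSub (m : LeibnizMul K A) {S T : Submodule K A} {x y : A}
    (hx : x ∈ S) (hy : y ∈ T) : m.mul x y ∈ m.mulSub S T :=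
  mulSub_le.1 le_rfl x hx y hy

theorem mulSub_mono_right (m : LeibnizMul K A) (S : Submodule K A) : Monotone (m.mulSub S) :=
  fun T U hTU => by
    simpa only [mulSub_eq_map₂] using Submodule.map₂_le_map₂_right hTU

theorem mulSub_sup_left (m : LeibnizMul K A) (S T U : Submodule K A) :
    m.mulSub (S ⊔ T) U = m.mulSub S U ⊔ m.mulSub T U := by
  simp only [mulSub_eq_map₂, Submodule.map₂_sup_left]

theorem mulSub_iSup_right {ι : Sort*} (m : LeibnizMul K A) (S : Submodule K A)
    (T : ι → Submodule K A) : m.mulSub S (⨆ i, T i) = ⨆ i, m.mulSub S (T i) := by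
  simp only [mulSub_eq_map₂, Submodule.map₂_iSup_right]

theorem isIdeal_of_mulSub_top_le {m : LeibnizMul K A} {S : Submodule K A}
    (hS : m.mulSub ⊤ ⊤ ≤ S) : m.IsIdeal S := fun _ _ _ =>
  ⟨hS (m.mul_mem_mulSub trivial trivial), hS (m.mul_mem_mulSub trivial trivial)⟩

theorem IsIdeal.isSubalg {m : LeibnizMul K A} {S : Submodule K A} (hS : m.IsIdeal S) :
    m.IsSubalg S := fun x _ y hy => (hS x y hy).1

/-- The lower central series of `A` as a left `S`-module: `moduleLcs m S n = S·(S·(⋯(S·A)))` with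
`n` factors `S`. It starts at `A`, not at `S` as `lcsIn` does, so that its index is exactly the
number of factors from `S`; this makes the two-variable count in `moduleLcs_sup_le` additive. -/
def moduleLcs (m : LeibnizMul K A) (S : Submodule K A) : ℕ → Submodule K A
  | 0 => ⊤
  | (n + 1) => m.mulSub S (m.moduleLcs S n)

theorem antitone_moduleLcs (m : LeibnizMul K A) (S : Submodule K A) :
    Antitone (m.moduleLcs S) := by
  refine antitone_nat_of_succ_le fun n => ?_
  induction n with
  | zero => exact le_top
  | succ n ih => exact m.mulSub_mono_right S ih

theorem lcsIn_le_moduleLcs (m : LeibnizMul K A) (S : Submodule K A) (n : ℕ) :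
    m.lcsIn S n ≤ m.moduleLcs S n := by
  induction n with
  | zero => exact le_top
  | succ n ih => exact m.mulSub_mono_right S ih

theorem IsIdeal.moduleLcs_succ_le_lcsIn {m : LeibnizMul K A} {S : Submodule K A}
    (hS : m.IsIdeal S) (n : ℕ) : m.moduleLcs S (n + 1) ≤ m.lcsIn S n := by
  induction n with
  | zero => exact mulSub_le.2 fun s hs y _ => (hS y s hs).2
  | succ n ih => exact m.mulSub_mono_right S ih

theorem IsIdeal.exists_lcsIn_eq_bot_iff {m : LeibnizMul K A} {S : Submodule K A}
    (hS : m.IsIdeal S) : (∃ n, m.lcsIn S n = ⊥) ↔ ∃ n, m.moduleLcs S n = ⊥ :=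
  ⟨fun ⟨n, hn⟩ => ⟨n + 1, le_bot_iff.1 (hn ▸ hS.moduleLcs_succ_le_lcsIn n)⟩,
    fun ⟨n, hn⟩ => ⟨n, le_bot_iff.1 (hn ▸ m.lcsIn_le_moduleLcs S n)⟩⟩

theorem IsIdeal.mul_mem_moduleLcs {m : LeibnizMul K A} {S : Submodule K A} (hS : m.IsIdeal S)
    (n : ℕ) (x : A) {y : A} (hy : y ∈ m.moduleLcs S n) : m.mul x y ∈ m.moduleLcs S n := by
  induction n generalizing y with
  | zero => trivial
  | succ n ih =>
    suffices h : m.moduleLcs S (n + 1) ≤ (m.moduleLcs S (n + 1)).comap (m.mul x) from h hy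
    refine mulSub_le.2 fun s hs z hz => ?_
    rw [Submodule.mem_comap, m.leibniz]
    exact add_mem (m.mul_mem_mulSub (hS x s hs).1 hz) (m.mul_mem_mulSub hs (ih hz))

theorem IsIdeal.mulSub_moduleLcs_le {m : LeibnizMul K A} {S : Submodule K A} (hS : m.IsIdeal S)
    (U : Submodule K A) (n : ℕ) : m.mulSub U (m.moduleLcs S n) ≤ m.moduleLcs S n :=
  mulSub_le.2 fun x _ _ hy => hS.mul_mem_moduleLcs n x hy

theorem IsIdeal.moduleLcs_sup_le {m : LeibnizMul K A} {S T : Submodule K A} (hS : m.IsIdeal S)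
    (hT : m.IsIdeal T) (n : ℕ) :
    m.moduleLcs (S ⊔ T) n ≤
      ⨆ p ∈ antidiagonal n, m.moduleLcs S p.1 ⊓ m.moduleLcs T p.2 := by
  induction n with
  | zero => simp [moduleLcs]
  | succ n ih =>
    refine (m.mulSub_mono_right (S ⊔ T) ih).trans ?_
    simp only [mulSub_iSup_right, mulSub_sup_left]
    refine iSup₂_le fun ⟨i, j⟩ hij => ?_
    have hij : i + j = n := mem_antidiagonal.1 hij
    have hS_mul : m.mulSub S (m.moduleLcs S i ⊓ m.moduleLcs T j) ≤
        m.moduleLcs S (i + 1) ⊓ m.moduleLcs T j :=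
      le_inf (m.mulSub_mono_right S inf_le_left)
        ((m.mulSub_mono_right S inf_le_right).trans (hT.mulSub_moduleLcs_le S j))
    have hT_mul : m.mulSub T (m.moduleLcs S i ⊓ m.moduleLcs T j) ≤
        m.moduleLcs S i ⊓ m.moduleLcs T (j + 1) :=
      le_inf ((m.mulSub_mono_right T inf_le_left).trans (hS.mulSub_moduleLcs_le T i))
        (m.mulSub_mono_right T inf_le_right)
    exact sup_le
      (le_iSup₂_of_le (i + 1, j) (mem_antidiagonal.2 (by omega)) hS_mul)
      (le_iSup₂_of_le (i, j + 1) (mem_antidiagonal.2 (by omega)) hT_mul)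

theorem IsIdeal.moduleLcs_sup_add_eq_bot {m : LeibnizMul K A} {S T : Submodule K A}
    (hS : m.IsIdeal S) (hT : m.IsIdeal T) {a b : ℕ} (ha : m.moduleLcs S a = ⊥)
    (hb : m.moduleLcs T b = ⊥) : m.moduleLcs (S ⊔ T) (a + b) = ⊥ := by
  refine le_bot_iff.1 ((hS.moduleLcs_sup_le hT (a + b)).trans (iSup₂_le fun ⟨i, j⟩ hij => ?_))
  have hij : i + j = a + b := mem_antidiagonal.1 hij
  obtain hi | hj : a ≤ i ∨ b ≤ j := by omega
  · exact inf_le_left.trans (ha ▸ m.antitone_moduleLcs S hi)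
  · exact inf_le_right.trans (hb ▸ m.antitone_moduleLcs T hj)

theorem IsIdeal.sup {m : LeibnizMul K A} {S T : Submodule K A} (hS : m.IsIdeal S)
    (hT : m.IsIdeal T) : m.IsIdeal (S ⊔ T) := by
  intro x y hy
  obtain ⟨s, hs, t, ht, rfl⟩ := Submodule.mem_sup.1 hy
  simp only [map_add, LinearMap.add_apply]
  exact ⟨Submodule.add_mem_sup (hS x s hs).1 (hT x t ht).1,
    Submodule.add_mem_sup (hS x s hs).2 (hT x t ht).2⟩

theorem IsIdeal.exists_lcsIn_sup_eq_bot {m : LeibnizMul K A} {S T : Submodule K A}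
    (hS : m.IsIdeal S) (hT : m.IsIdeal T) (hnS : ∃ n, m.lcsIn S n = ⊥)
    (hnT : ∃ n, m.lcsIn T n = ⊥) : ∃ n, m.lcsIn (S ⊔ T) n = ⊥ := by
  obtain ⟨a, ha⟩ := hS.exists_lcsIn_eq_bot_iff.1 hnS
  obtain ⟨b, hb⟩ := hT.exists_lcsIn_eq_bot_iff.1 hnT
  exact (hS.sup hT).exists_lcsIn_eq_bot_iff.2 ⟨a + b, hS.moduleLcs_sup_add_eq_bot hT ha hb⟩

end LeibnizMul

section Rank

variable {K V : Type*} [DivisionRing K] [AddCommGroup V] [Module K V]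

theorem exists_isCompl_ne_top_of_one_lt_rank (h : 1 < Module.rank K V) :
    ∃ S T : Submodule K V, IsCompl S T ∧ S ≠ ⊤ ∧ T ≠ ⊤ := by
  have : Nontrivial V := rank_pos_iff_nontrivial.1 (zero_lt_one.trans h)
  obtain ⟨v, hv⟩ := exists_ne (0 : V)
  obtain ⟨T, hT⟩ := Submodule.exists_isCompl (Submodule.span K {v})
  refine ⟨Submodule.span K {v}, T, hT, fun htop => h.not_ge ?_, fun htop => hv ?_⟩
  · exact rank_le_one v fun w => Submodule.mem_span_singleton.1 (htop ▸ Submodule.mem_top)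
  · exact Submodule.span_singleton_eq_bot.1 (eq_bot_of_isCompl_top (htop ▸ hT))

theorem exists_sup_eq_top_of_one_lt_rank_quotient {W : Submodule K V}
    (h : 1 < Module.rank K (V ⧸ W)) :
    ∃ S T : Submodule K V, (W ≤ S ∧ S ≠ ⊤) ∧ (W ≤ T ∧ T ≠ ⊤) ∧ S ⊔ T = ⊤ := by
  obtain ⟨S, T, hST, hS, hT⟩ := exists_isCompl_ne_top_of_one_lt_rank h
  let e := Submodule.comapMkQRelIso W
  have he {U : Submodule K (V ⧸ W)} (hU : U ≠ ⊤) : (e U).1 ≠ ⊤ := fun htop =>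
    hU ((map_eq_top_iff e).1 (Subtype.ext htop))
  have he_sup : e S ⊔ e T = ⊤ := by rw [← map_sup, hST.sup_eq_top, map_top]
  exact ⟨(e S).1, (e T).1, ⟨(e S).2, he hS⟩, ⟨(e T).2, he hT⟩, congrArg Subtype.val he_sup⟩

end Rank

theorem stmt6_general {K A : Type*} [Field K] [AddCommGroup A] [Module K A]
    (m : LeibnizMul K A) (hA : ¬ m.IsNilpotent)
    (hsub : ∀ S : Submodule K A, m.mulSub ⊤ ⊤ ≤ S → S ≠ ⊤ → ∃ n, m.lcsIn S n = ⊥) :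
    Module.rank K (A ⧸ m.mulSub ⊤ ⊤) ≤ 1 := by
  by_contra! h
  obtain ⟨S, T, ⟨hS, hS_ne⟩, ⟨hT, hT_ne⟩, hST⟩ := exists_sup_eq_top_of_one_lt_rank_quotient h
  apply hA
  rw [LeibnizMul.IsNilpotent, ← hST]
  exact (LeibnizMul.isIdeal_of_mulSub_top_le hS).exists_lcsIn_sup_eq_bot
    (LeibnizMul.isIdeal_of_mulSub_top_le hT) (hsub S hS hS_ne) (hsub T hT hT_ne)

/-- if `A` is not nilpotent but all proper subalgebras are nilpotent,
then `dim(A/A²) ≤ 1`. -/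
theorem stmt6 {K A : Type*} [Field K] [AddCommGroup A] [Module K A] [FiniteDimensional K A]
    (m : LeibnizMul K A) (hA : ¬ m.IsNilpotent)
    (hsub : ∀ S : Submodule K A, m.IsSubalg S → S ≠ ⊤ → ∃ n, m.lcsIn S n = ⊥) :
    Module.finrank K (A ⧸ m.mulSub ⊤ ⊤) ≤ 1 :=
  Module.finrank_le_of_rank_le <| by
    exact_mod_cast stmt6_general m hA fun S hS =>
      hsub S (LeibnizMul.isIdeal_of_mulSub_top_le hS).isSubalg
end

section
/- Let A be a finite-dimensional cyclic left Leibniz algebra generated by a. Then A has a unique Cartan subalgebra, namely the Fitting null component of L_a acting on A. -/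
open Polynomial LinearMap

/-! Writing `L_x` for left multiplication by `x`, the Leibniz identity reads `L_{xy} = [L_x, L_y]`,
which vanishes as soon as `L_x` and `L_y` are multiples of one operator. Hence in a cyclic algebra
every `L_x` is a multiple of `L_a`, and the normalizer of a subalgebra `C` containing some `f` with
`L_f = L_a` is the preimage of `C` under `L_a`. The Fitting null component contains such an `f`, as
`a` differs from one of its elements by a product. So does every self-normalizing `C`: otherwise `C`
acts trivially on the left, and its normalizer absorbs first all products and then all of `A`. -/

namespace LeibnizMul

variable {K A : Type*} [Field K] [AddCommGroup A] [Module K A] (m : LeibnizMul K A)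
  {a c x y : A} {C : Submodule K A}

/-- A Cartan subalgebra: a nilpotent subalgebra which is its own normalizer. Nilpotency is stated
through the lower central series of `C` computed inside the ambient algebra. -/
def IsCartan (C : Submodule K A) : Prop :=
  m.IsSubalg C ∧ (∃ n, m.lcsIn C n = ⊥) ∧ m.normalizer C = C

theorem mem_normalizer : x ∈ m.normalizer C ↔ ∀ c ∈ C, m.mul x c ∈ C ∧ m.mul c x ∈ C := by
  simp [normalizer]

theorem mem_fittingNull : x ∈ m.fittingNull a ↔ ∃ k, (m.mul a ^ k) x = 0 := by
  have hmono : Monotone fun k ↦ ker (m.mul a ^ k) := (m.mul a).iterateKer.monotone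
  simp only [fittingNull, Submodule.mem_iSup_of_directed _ hmono.directed_le, mem_ker]

theorem comap_mul_fittingNull : (m.fittingNull a).comap (m.mul a) = m.fittingNull a := by
  ext x
  simp only [Submodule.mem_comap, mem_fittingNull, ← Module.End.mul_apply, ← pow_succ]
  refine ⟨fun ⟨k, hk⟩ ↦ ⟨k + 1, hk⟩, fun ⟨k, hk⟩ ↦ ⟨k, ?_⟩⟩
  rw [pow_succ', Module.End.mul_apply, hk, map_zero]

variable {m}

theorem fittingNull_congr (h : m.mul x = m.mul y) : m.fittingNull x = m.fittingNull y := by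
  rw [fittingNull, fittingNull, h]

theorem fittingNull_le_of_comap_le (hC : C.comap (m.mul a) ≤ C) : m.fittingNull a ≤ C := by
  refine iSup_le fun k ↦ ?_
  induction k with
  | zero => simp [Module.End.one_eq_id]
  | succ k ih =>
    rw [pow_succ, Module.End.mul_eq_comp, ker_comp]
    exact (Submodule.comap_mono ih).trans hC

theorem pow_mul_mem_lcsIn (hc : c ∈ C) (hx : x ∈ C) (n : ℕ) :
    (m.mul c ^ n) x ∈ m.lcsIn C n := by
  induction n with
  | zero => exact hx
  | succ n ih =>
    rw [pow_succ', Module.End.mul_apply]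
    exact Submodule.subset_span (Set.mem_image2_of_mem hc ih)

theorem le_fittingNull_of_lcsIn_eq_bot {n : ℕ} (hn : m.lcsIn C n = ⊥) (hc : c ∈ C) :
    C ≤ m.fittingNull c := by
  intro x hx
  have hpow : (m.mul c ^ n) x ∈ m.lcsIn C n := pow_mul_mem_lcsIn hc hx n
  rw [hn, Submodule.mem_bot] at hpow
  exact m.mem_fittingNull.2 ⟨n, hpow⟩

variable (m) in
theorem mul_mul_eq_lie (x y : A) : m.mul (m.mul x y) = ⁅m.mul x, m.mul y⁆ := by
  ext z
  exact eq_sub_of_add_eq (m.leibniz x y z).symm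

theorem mul_mul_eq_zero_of_mem_span {f : Module.End K A} (hx : m.mul x ∈ K ∙ f)
    (hy : m.mul y ∈ K ∙ f) : m.mul (m.mul x y) = 0 := by
  obtain ⟨r, hr⟩ := Submodule.mem_span_singleton.1 hx
  obtain ⟨s, hs⟩ := Submodule.mem_span_singleton.1 hy
  rw [mul_mul_eq_lie, ← hr, ← hs]
  exact (((Commute.refl f).smul_left r).smul_right s).lie_eq

theorem mul_mem_span_of_subalgGen_eq_top (hcyc : m.subalgGen a = ⊤) (x : A) :
    m.mul x ∈ K ∙ m.mul a := by
  have hsub : m.IsSubalg ((K ∙ m.mul a).comap m.mul) := fun x hx y hy ↦ by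
    rw [Submodule.mem_comap, mul_mul_eq_zero_of_mem_span hx hy]
    exact zero_mem _
  have hle : m.subalgGen a ≤ (K ∙ m.mul a).comap m.mul :=
    sInf_le ⟨hsub, Submodule.mem_span_singleton_self (m.mul a)⟩
  exact hle (hcyc ▸ Submodule.mem_top)

theorem mul_mem_of_mem_span (hx : m.mul x ∈ K ∙ m.mul a) (hy : m.mul a y ∈ C) :
    m.mul x y ∈ C := by
  obtain ⟨r, hr⟩ := Submodule.mem_span_singleton.1 hx
  rw [← hr]
  exact C.smul_mem r hy

theorem normalizer_eq_comap_mul (hL : ∀ x, m.mul x ∈ K ∙ m.mul a) (hC : m.IsSubalg C)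
    (ha : a ∈ C) : m.normalizer C = C.comap (m.mul a) := by
  ext x
  rw [mem_normalizer, Submodule.mem_comap]
  exact ⟨fun hx ↦ (hx a ha).2, fun hax c hc ↦
    ⟨mul_mem_of_mem_span (hL x) (hC a ha c hc), mul_mem_of_mem_span (hL c) hax⟩⟩

theorem isSubalg_fittingNull (hL : ∀ x, m.mul x ∈ K ∙ m.mul a) :
    m.IsSubalg (m.fittingNull a) :=
  fun x _ _ hy ↦ mul_mem_of_mem_span (hL x) (m.comap_mul_fittingNull.ge hy)

theorem lcsIn_le_map_pow (hL : ∀ x, m.mul x ∈ K ∙ m.mul a) (C : Submodule K A) (n : ℕ) :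
    m.lcsIn C n ≤ C.map (m.mul a ^ n) := by
  induction n with
  | zero => simp [lcsIn, Module.End.one_eq_id]
  | succ n ih =>
    refine Submodule.span_le.2 ?_
    rintro _ ⟨x, -, y, hy, rfl⟩
    refine mul_mem_of_mem_span (hL x) ?_
    rw [pow_succ', Module.End.mul_eq_comp, Submodule.map_comp]
    exact Submodule.mem_map_of_mem (ih hy)

theorem exists_lcsIn_fittingNull_eq_bot [FiniteDimensional K A]
    (hL : ∀ x, m.mul x ∈ K ∙ m.mul a) : ∃ n, m.lcsIn (m.fittingNull a) n = ⊥ := by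
  obtain ⟨n, hn⟩ := (m.mul a).eventually_iSup_ker_pow_eq.exists
  refine ⟨n, le_bot_iff.1 ((lcsIn_le_map_pow hL _ n).trans ?_)⟩
  rw [Submodule.map_le_iff_le_comap, fittingNull, hn]
  rfl

theorem exists_mem_fittingNull_mul_eq [FiniteDimensional K A]
    (hmul : ∀ y, m.mul (m.mul a y) = 0) : ∃ f ∈ m.fittingNull a, m.mul f = m.mul a := by
  have hfit := (m.mul a).isCompl_iSup_ker_pow_iInf_range_pow
  obtain ⟨f, r, hf, hr, hfr⟩ := Submodule.codisjoint_iff_exists_add_eq.1 hfit.codisjoint a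
  obtain ⟨s, rfl⟩ : r ∈ range (m.mul a) := by simpa using Submodule.mem_iInf _ |>.1 hr 1
  refine ⟨f, hf, ?_⟩
  rw [← hfr, map_add, hmul, add_zero]

theorem isCartan_fittingNull [FiniteDimensional K A] (hL : ∀ x, m.mul x ∈ K ∙ m.mul a) :
    m.IsCartan (m.fittingNull a) := by
  refine ⟨isSubalg_fittingNull hL, exists_lcsIn_fittingNull_eq_bot hL, ?_⟩
  obtain ⟨f, hf, hfa⟩ := exists_mem_fittingNull_mul_eq fun y ↦
    mul_mul_eq_zero_of_mem_span (hL a) (hL y)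
  rw [normalizer_eq_comap_mul (hfa ▸ hL) (isSubalg_fittingNull hL) hf, hfa,
    comap_mul_fittingNull]

theorem eq_top_of_normalizer_eq_of_mul_eq_zero (hmul : ∀ x y, m.mul (m.mul x y) = 0)
    (hN : m.normalizer C = C) (h0 : ∀ c ∈ C, m.mul c = 0) : C = ⊤ := by
  have hmem (x y : A) : m.mul x y ∈ C := by
    rw [← hN, mem_normalizer]
    intro c hc
    simp [hmul, h0 c hc]
  rw [← hN, eq_top_iff]
  exact fun x _ ↦ m.mem_normalizer.2 fun c _ ↦ ⟨hmem x c, hmem c x⟩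

theorem exists_mem_mul_eq_of_normalizer_eq (hL : ∀ x, m.mul x ∈ K ∙ m.mul a)
    (hN : m.normalizer C = C) : ∃ f ∈ C, m.mul f = m.mul a := by
  by_cases h0 : ∀ c ∈ C, m.mul c = 0
  · have htop : C = ⊤ :=
      eq_top_of_normalizer_eq_of_mul_eq_zero
        (fun x y ↦ mul_mul_eq_zero_of_mem_span (hL x) (hL y)) hN h0
    exact ⟨a, htop ▸ Submodule.mem_top, rfl⟩
  · push Not at h0
    obtain ⟨c, hc, hc0⟩ := h0
    obtain ⟨r, hr⟩ := Submodule.mem_span_singleton.1 (hL c)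
    have hr0 : r ≠ 0 := by
      rintro rfl
      exact hc0 (by rw [← hr, zero_smul])
    exact ⟨r⁻¹ • c, C.smul_mem _ hc, by rw [map_smul, ← hr, inv_smul_smul₀ hr0]⟩

theorem IsCartan.eq_fittingNull_of_mem (hC : m.IsCartan C) (hL : ∀ x, m.mul x ∈ K ∙ m.mul a)
    (ha : a ∈ C) : C = m.fittingNull a := by
  obtain ⟨hsub, ⟨n, hn⟩, hN⟩ := hC
  refine le_antisymm (le_fittingNull_of_lcsIn_eq_bot hn ha) (fittingNull_le_of_comap_le ?_)
  rw [← normalizer_eq_comap_mul hL hsub ha, hN]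

theorem IsCartan.eq_fittingNull (hC : m.IsCartan C) (hL : ∀ x, m.mul x ∈ K ∙ m.mul a) :
    C = m.fittingNull a := by
  obtain ⟨f, hf, hfa⟩ := exists_mem_mul_eq_of_normalizer_eq hL hC.2.2
  rw [← fittingNull_congr hfa]
  exact hC.eq_fittingNull_of_mem (hfa ▸ hL) hf

end LeibnizMul

theorem stmt13_general {K A : Type*} [Field K] [AddCommGroup A] [Module K A]
    [FiniteDimensional K A] (m : LeibnizMul K A) (a : A) (hL : ∀ x, m.mul x ∈ K ∙ m.mul a)
    (C : Submodule K A) : m.IsCartan C ↔ C = m.fittingNull a :=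
  ⟨fun hC ↦ hC.eq_fittingNull hL, fun h ↦ h ▸ LeibnizMul.isCartan_fittingNull hL⟩

/-- a cyclic Leibniz algebra generated by `a` has a unique Cartan
subalgebra, namely the Fitting null component of `L_a`. -/
theorem stmt13 {K A : Type*} [Field K] [AddCommGroup A] [Module K A] [FiniteDimensional K A]
    (m : LeibnizMul K A) (a : A) (hcyc : m.subalgGen a = ⊤) :
    ∀ C : Submodule K A,
      (m.IsSubalg C ∧ (∃ n, m.lcsIn C n = ⊥) ∧ m.normalizer C = C) ↔
        C = m.fittingNull a :=
  stmt13_general m a (LeibnizMul.mul_mem_span_of_subalgGen_eq_top hcyc)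
end
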